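/- Let h(t) be a reciprocal polynomial of degree n (t^n h(1/t) = h(t)) over a field of characteristic zero. Then there exists a unique polynomial gamma(u) of degree at most floor(n/2) such that h(t) = (1+t)^n * gamma(t/(1+t)^2). -/

import Mathlib

/-!
Write `u = t / (1 + t) ^ 2`, a power series with zero constant term and nonzero linear term.

Existence is by induction on `n` in steps of two. Subtracting `h₀ (1 + t) ^ n` from `h` leaves
a palindromic polynomial whose constant and `t ^ n` coefficients vanish, so it is `t g` with
`g` palindromic for `n - 2`. If `g = (1 + t) ^ (n - 2) γ'(u)`, then
`t g = (1 + t) ^ n u γ'(u)`, and `γ = h₀ + u γ'` works (`exists_gamma`).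

Uniqueness holds because `(1 + t) ^ n` is a nonzero element of a domain and `γ ↦ γ(u)` is
injective: the constant coefficient of `γ(u)` is that of `γ`, and `u` can be cancelled
(`coeff_eq_zero_of_aeval_eq_zero`).
-/

lemma constantCoeff_aeval_of_constantCoeff_eq_zero {F : Type*} [Field F] {u : PowerSeries F}
    (hu : PowerSeries.constantCoeff u = 0) (p : Polynomial F) :
    PowerSeries.constantCoeff (Polynomial.aeval u p) = p.coeff 0 := by
  conv_lhs => rw [← Polynomial.divX_mul_X_add p]
  simp [hu]

/-- A nonzero power series without constant term is transcendental over the base field. -/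
lemma coeff_eq_zero_of_aeval_eq_zero {F : Type*} [Field F] {u : PowerSeries F}
    (hu : PowerSeries.constantCoeff u = 0) (hu0 : u ≠ 0) (k : ℕ) :
    ∀ p : Polynomial F, Polynomial.aeval u p = 0 → p.coeff k = 0 := by
  induction k with
  | zero =>
    intro p hp
    rw [← constantCoeff_aeval_of_constantCoeff_eq_zero hu p, hp, map_zero]
  | succ k ih =>
    intro p hp
    have h0 : p.coeff 0 = 0 := by
      rw [← constantCoeff_aeval_of_constantCoeff_eq_zero hu p, hp, map_zero]
    rw [← Polynomial.divX_mul_X_add p] at hp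
    simp only [h0, map_zero, add_zero, map_mul, Polynomial.aeval_X] at hp
    rw [← Polynomial.coeff_divX]
    exact ih _ ((mul_eq_zero.mp hp).resolve_right hu0)

/-- Existence for palindromic polynomials of degree at most `n`. The degree is only bounded,
since the induction may produce polynomials of smaller degree. The hypothesis on `u` is the
defining equation of `u = t / (1 + t) ^ 2`. -/
lemma exists_gamma {F : Type*} [Field F] {u : PowerSeries F}
    (hu : (1 + PowerSeries.X) ^ 2 * u = PowerSeries.X) (n : ℕ) :
    ∀ h : Polynomial F, (∀ i, n < i → h.coeff i = 0) →
      (∀ i j, i + j = n → h.coeff i = h.coeff j) →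
      ∃ γ : Polynomial F, γ.natDegree ≤ n / 2 ∧
        (h : PowerSeries F) = (1 + PowerSeries.X) ^ n * Polynomial.aeval u γ := by
  induction n using Nat.strong_induction_on with
  | _ n ih =>
  intro h hd hs
  obtain ⟨k, hk⟩ : ∃ k, k = h - Polynomial.C (h.coeff 0) * (1 + Polynomial.X) ^ n := ⟨_, rfl⟩
  have hkc : ∀ i, k.coeff i = h.coeff i - h.coeff 0 * (n.choose i : F) := by
    intro i
    rw [hk, Polynomial.coeff_sub, Polynomial.coeff_C_mul, Polynomial.coeff_one_add_X_pow]
  have hk0 : k.coeff 0 = 0 := by simp [hkc]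
  have hkd : ∀ i, n < i → k.coeff i = 0 := by
    intro i hi
    simp [hkc, hd i hi, Nat.choose_eq_zero_of_lt hi]
  have hks : ∀ i j, i + j = n → k.coeff i = k.coeff j := by
    intro i j hij
    rw [hkc, hkc, hs i j hij, Nat.choose_symm_of_eq_add hij.symm]
  have hkn : k.coeff n = 0 := by rw [hks n 0 (by simp), hk0]
  have hh : h = Polynomial.C (h.coeff 0) * (1 + Polynomial.X) ^ n + k := by rw [hk]; ring
  rcases Nat.lt_or_ge n 2 with hn | hn
  · have hkz : k = 0 := by
      ext i
      rcases Nat.lt_or_ge n i with hi | hi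
      · simp [hkd i hi]
      · obtain rfl | rfl : i = 0 ∨ i = n := by omega
        · simp [hk0]
        · simp [hkn]
    refine ⟨Polynomial.C (h.coeff 0), by simp, ?_⟩
    conv_lhs => rw [hh, hkz]
    simp [mul_comm]
  · obtain ⟨m, rfl⟩ : ∃ m, n = m + 2 := ⟨n - 2, by omega⟩
    obtain ⟨γ, hγd, hγ⟩ := ih m (by omega) k.divX
      (by
        intro i hi
        rw [Polynomial.coeff_divX]
        rcases Nat.lt_or_ge (m + 2) (i + 1) with h1 | h1
        · exact hkd _ h1
        · rw [show i + 1 = m + 2 by omega, hkn])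
      (by
        intro i j hij
        rw [Polynomial.coeff_divX, Polynomial.coeff_divX]
        exact hks _ _ (by omega))
    refine ⟨Polynomial.C (h.coeff 0) + Polynomial.X * γ, ?_, ?_⟩
    · refine Polynomial.natDegree_add_le_of_degree_le (by simp) ?_
      refine Polynomial.natDegree_mul_le.trans ?_
      rw [Polynomial.natDegree_X]
      omega
    · have hkX : k = k.divX * Polynomial.X := by
        conv_lhs => rw [← Polynomial.divX_mul_X_add k, hk0]
        simp
      conv_lhs => rw [hh, hkX]
      simp only [Polynomial.coe_add, Polynomial.coe_mul, Polynomial.coe_pow, Polynomial.coe_C,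
        Polynomial.coe_X, Polynomial.coe_one, hγ, map_add, map_mul, Polynomial.aeval_C,
        Polynomial.aeval_X, PowerSeries.algebraMap_apply, Algebra.algebraMap_self,
        RingHom.id_apply]
      linear_combination (-(1 + PowerSeries.X) ^ m * Polynomial.aeval u γ) * hu

open PowerSeries

/-- For a reciprocal polynomial `h` of degree `n` over a field of characteristic zero,
there is a unique polynomial `γ` of degree at most `⌊n/2⌋` with
`h(t) = (1+t)^n γ(t/(1+t)^2)`. -/
theorem existsUnique_gamma_of_reciprocal {F : Type*} [Field F] [CharZero F]
    (n : ℕ) (h : Polynomial F) (hne : h ≠ 0) (hdeg : h.natDegree = n)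
    (hrecip : Polynomial.reflect n h = h) :
    ∃! γ : Polynomial F, γ.natDegree ≤ n / 2 ∧
      (h : PowerSeries F) =
        (1 + PowerSeries.X) ^ n *
          Polynomial.aeval (PowerSeries.X * (((1 + PowerSeries.X) ^ 2)⁻¹ : PowerSeries F)) γ := by
  have hc : PowerSeries.constantCoeff ((1 + PowerSeries.X) ^ 2 : PowerSeries F) ≠ 0 := by simp
  have h1 : (1 + PowerSeries.X : PowerSeries F) ≠ 0 := by
    intro h0
    simp [h0] at hc
  obtain ⟨u, hu⟩ : ∃ u : PowerSeries F,
    u = PowerSeries.X * (((1 + PowerSeries.X) ^ 2)⁻¹ : PowerSeries F) := ⟨_, rfl⟩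
  rw [← hu]
  have hueq : (1 + PowerSeries.X) ^ 2 * u = PowerSeries.X := by
    rw [hu, mul_left_comm, PowerSeries.mul_inv_cancel _ hc, mul_one]
  have hu0 : u ≠ 0 := by
    rintro rfl
    exact PowerSeries.X_ne_zero (by rw [← hueq, mul_zero])
  have huc : PowerSeries.constantCoeff u = 0 := by simp [hu]
  obtain ⟨γ, hγd, hγ⟩ := exists_gamma hueq n h
    (fun i hi => Polynomial.coeff_eq_zero_of_natDegree_lt (hdeg ▸ hi))
    (by
      intro i j hij
      conv_lhs => rw [← hrecip]
      rw [Polynomial.coeff_reflect, Polynomial.revAt_le (by omega)]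
      congr 1
      omega)
  refine ⟨γ, ⟨hγd, hγ⟩, ?_⟩
  rintro δ ⟨-, hδ⟩
  have he : Polynomial.aeval u δ = Polynomial.aeval u γ :=
    mul_left_cancel₀ (pow_ne_zero n h1) (hδ.symm.trans hγ)
  ext i
  have := coeff_eq_zero_of_aeval_eq_zero huc hu0 i (δ - γ) (by rw [map_sub, he, sub_self])
  rwa [Polynomial.coeff_sub, sub_eq_zero] at this
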